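/- Evaluation of the diagonal coefficient sum for the inverse Euler product: Let α_{-1} be the multiplicative function on ℳ determined by: α_{-1}(P) = −1 for deg P ≤ X and 0 for deg P > X; α_{-1}(P²) = 0 for deg P ≤ X/2, 1/2 for X/2 < deg P ≤ X, and 0 for deg P > X; α_{-1}(P³) = 0 for deg P ≤ X/2, −1/2 for X/2 < deg P ≤ X, and 0 for deg P > X; α_{-1}(P^m) = 0 for m ≥ 4. Let V ∈ ℳ (possibly depending on R). Then, as X and deg R tend to infinity with X ≤ log_q(deg R), Σ_{H,S,T ∈ ℳ with HST ∈ 𝒮_ℳ(X), gcd(S,T)=1, gcd(HST,V)=1, deg(HS) ≤ (deg R)/10, deg(HT) ≤ (deg R)/10} α_{-1}(HS)α_{-1}(HT)/|HST| = (1 + O(q^{-X/2})) Π_{P ∈ 𝒫, deg P ≤ X, P ∤ V} (1 − 1/|P|) + O(|R|^{-1/21}); in particular this sum is asymptotic to Π_{deg P ≤ X, P ∤ V} (1 − 1/|P|). -/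

import Mathlib

open scoped BigOperators
open Filter

noncomputable section

namespace FFEH

variable {Fq : Type} [Field Fq] [Fintype Fq]

open Classical in
/-- The absolute value `|A| = q ^ deg A` of a polynomial `A ∈ 𝔽_q[T]`, with `|0| = 0`. -/
def absP (A : Polynomial Fq) : ℝ :=
  if A = 0 then 0 else (Fintype.card Fq : ℝ) ^ A.natDegree

/-- Monic irreducible ("prime") polynomials. -/
def IsMonicPrime (P : Polynomial Fq) : Prop := P.Monic ∧ Irreducible P

/-- A Dirichlet character of modulus `R` on `𝔽_q[T]`. -/
structure IsDirichletChar (R : Polynomial Fq) (χ : Polynomial Fq → ℂ) : Prop where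
  map_one' : χ 1 = 1
  map_mul' : ∀ A B : Polynomial Fq, χ (A * B) = χ A * χ B
  congr' : ∀ A B : Polynomial Fq, R ∣ A - B → χ A = χ B
  eq_zero_iff' : ∀ A : Polynomial Fq, χ A = 0 ↔ ¬ IsCoprime A R

/-- A primitive Dirichlet character of modulus `R`: one induced by no character of
modulus of strictly smaller degree. -/
def IsPrimitiveChar (R : Polynomial Fq) (χ : Polynomial Fq → ℂ) : Prop :=
  IsDirichletChar R χ ∧
    ∀ S : Polynomial Fq, S.Monic → S ∣ R → S.natDegree < R.natDegree →
      ¬ ∃ χ₁ : Polynomial Fq → ℂ, IsDirichletChar S χ₁ ∧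
        ∀ A : Polynomial Fq, IsCoprime A R → χ A = χ₁ A

/-- An even character: trivial on the nonzero constants. -/
def IsEvenChar (χ : Polynomial Fq → ℂ) : Prop :=
  ∀ a : Fq, a ≠ 0 → χ (Polynomial.C a) = 1

/-- `φ*(R)`: the number of primitive characters of modulus `R`. -/
def numPrimChars (R : Polynomial Fq) : ℕ :=
  Set.ncard {χ : Polynomial Fq → ℂ | IsPrimitiveChar R χ}

/-- The Euler totient `φ(R) = #(𝔽_q[T]/(R))ˣ`. -/
def phiP (R : Polynomial Fq) : ℕ :=
  Nat.card ((Polynomial Fq ⧸ Ideal.span {R})ˣ)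

/-- `ω(A)`: the number of distinct monic prime divisors of `A`. -/
def omegaP (A : Polynomial Fq) : ℕ :=
  Set.ncard {P : Polynomial Fq | IsMonicPrime P ∧ P ∣ A}

open Classical in
/-- The Möbius function on monic polynomials. -/
def muP (A : Polynomial Fq) : ℤ :=
  if Squarefree A then (-1) ^ omegaP A else 0

/-- `d_k(A)`: the number of ways of writing `A` as an ordered product of `k` monic
polynomials. -/
def dk (k : ℕ) (A : Polynomial Fq) : ℕ :=
  Set.ncard {v : Fin k → Polynomial Fq | (∀ i, (v i).Monic) ∧ ∏ i, v i = A}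

/-- `A ∈ 𝒮_ℳ(X)`: `A` is monic and all its prime divisors have degree at most `X`. -/
def SmoothM (X : ℕ) (A : Polynomial Fq) : Prop :=
  A.Monic ∧ ∀ P : Polynomial Fq, IsMonicPrime P → P ∣ A → P.natDegree ≤ X

/-- The Dirichlet `L`-function of a non-trivial character `χ` of modulus `R`:
`L(s,χ) = ∑_{A monic, deg A < deg R} χ(A) |A|^{-s}`. -/
def Lfun (R : Polynomial Fq) (χ : Polynomial Fq → ℂ) (s : ℂ) : ℂ :=
  ∑ᶠ A ∈ {A : Polynomial Fq | A.Monic ∧ A.natDegree < R.natDegree},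
    χ A * (absP A : ℂ) ^ (-s)

open Classical in
/-- The von Mangoldt function: `Λ(A) = log |P|` if `A = P^j` (`P` monic prime, `j ≥ 1`),
and `0` otherwise. -/
def LambdaP (A : Polynomial Fq) : ℝ :=
  if h : ∃ P : Polynomial Fq, (P.Monic ∧ Irreducible P) ∧ ∃ j : ℕ, 1 ≤ j ∧ A = P ^ j
  then Real.log (absP h.choose) else 0

/-- The partial Euler product `P_X(s,χ)`. -/
def PX (X : ℕ) (χ : Polynomial Fq → ℂ) (s : ℂ) : ℂ :=
  Complex.exp (∑ᶠ A ∈ {A : Polynomial Fq | A.Monic ∧ A.natDegree ≤ X},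
    χ A * (LambdaP A : ℂ) / ((absP A : ℂ) ^ s * (Real.log (absP A) : ℂ)))

/-- The `L`-function of `χ` as a polynomial in the variable `w = q^{-s}`. -/
def LPoly (R : Polynomial Fq) (χ : Polynomial Fq → ℂ) : Polynomial ℂ :=
  ∑ n ∈ Finset.range R.natDegree,
    Polynomial.C (∑ᶠ A ∈ {A : Polynomial Fq | A.Monic ∧ A.natDegree = n}, χ A) *
      Polynomial.X ^ n

/-- The sum of `f` over the zeros of `L(s,χ)` counted with multiplicity, including
all the vertical `2π/log q`-periodic repetitions: the zeros are exactly the points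
`-log w / log q + 2πim/log q` for `w` a root (with multiplicity) of the `L`-polynomial
and `m ∈ ℤ`. -/
def zeroSum (R : Polynomial Fq) (χ : Polynomial Fq → ℂ) (f : ℂ → ℂ) : ℂ :=
  ((LPoly R χ).roots.map (fun w => ∑' m : ℤ,
    f (-Complex.log w / (Real.log (Fintype.card Fq) : ℂ) +
        2 * Real.pi * Complex.I * (m : ℂ) / (Real.log (Fintype.card Fq) : ℂ)))).sum

/-- The exponential integral `E₁(y) = ∫_{w=y}^{y+∞} e^{-w}/w dw`, along the horizontal
ray from `y` in the direction of `+1`. -/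
def E1 (y : ℂ) : ℂ :=
  ∫ t : ℝ in Set.Ioi (0 : ℝ), Complex.exp (-(y + (t : ℂ))) / (y + (t : ℂ))

/-- `U(z) = ∫_0^∞ u(x) E₁(z log x) dx`. -/
def Ufun (u : ℝ → ℝ) (z : ℂ) : ℂ :=
  ∫ x : ℝ in Set.Ioi (0 : ℝ), (u x : ℂ) * E1 (z * (Real.log x : ℂ))

/-- The Mellin transform `ũ(s) = ∫_0^∞ x^{s-1} u(x) dx`. -/
def mellinT (u : ℝ → ℝ) (s : ℂ) : ℂ :=
  ∫ x : ℝ in Set.Ioi (0 : ℝ), (x : ℂ) ^ (s - 1) * (u x : ℂ)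

/-- The arithmetic-factor constant `a(k)`. -/
def aConst (Fq : Type) [Field Fq] [Fintype Fq] (k : ℕ) : ℝ :=
  ∏' P : {P : Polynomial Fq // IsMonicPrime P},
    (1 - (absP P.1)⁻¹) ^ (k ^ 2) * ∑' m : ℕ, (dk k (P.1 ^ m) : ℝ) ^ 2 / absP (P.1 ^ m)

/-- The modified partial Euler product `P_X^*(s,χ)`. -/
def PXstar (X : ℕ) (χ : Polynomial Fq → ℂ) (s : ℂ) : ℂ :=
  (∏ᶠ P ∈ {P : Polynomial Fq | IsMonicPrime P ∧ P.natDegree ≤ X},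
      (1 - χ P / (absP P : ℂ) ^ s)⁻¹) *
    ∏ᶠ P ∈ {P : Polynomial Fq | IsMonicPrime P ∧ X < 2 * P.natDegree ∧ P.natDegree ≤ X},
      (1 + χ P ^ 2 / (2 * (absP P : ℂ) ^ (2 * s)))⁻¹

open Classical in
/-- The multiplicity of `P` in `A` (for `A ≠ 0`). -/
def multP (P A : Polynomial Fq) : ℕ :=
  if A = 0 then 0 else Nat.findGreatest (fun e => P ^ e ∣ A) A.natDegree

/-- Local coefficients of the Dirichlet series of `P_X^*(s,χ)^k`. -/
def locAlpha (k X : ℕ) (P : Polynomial Fq) (m : ℕ) : ℝ :=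
  if m = 0 then 1
  else if X < P.natDegree then 0
  else if 2 * P.natDegree ≤ X then (dk k (P ^ m) : ℝ)
  else ∑ j ∈ Finset.range (m / 2 + 1),
    (dk k (P ^ (m - 2 * j)) : ℝ) * (dk k (P ^ j) : ℝ) * (-(2 : ℝ)⁻¹) ^ j

/-- `α_k(A)`: the coefficients of the Dirichlet series `P_X^*(s,χ)^k = ∑ α_k(A)χ(A)|A|^{-s}`. -/
def alphaK (k X : ℕ) (A : Polynomial Fq) : ℝ :=
  ∏ᶠ P ∈ {P : Polynomial Fq | IsMonicPrime P ∧ P ∣ A}, locAlpha k X P (multP P A)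

/-- Local coefficients of the Dirichlet series of `P_X^*(s,χ)^{-1}`. -/
def locAlphaNeg (X : ℕ) (P : Polynomial Fq) (m : ℕ) : ℝ :=
  if m = 0 then 1
  else if X < P.natDegree then 0
  else if m = 1 then -1
  else if m = 2 then (if 2 * P.natDegree ≤ X then 0 else 2⁻¹)
  else if m = 3 then (if 2 * P.natDegree ≤ X then 0 else -2⁻¹)
  else 0

/-- The multiplicative function `α_{-1}`. -/
def alphaNeg (X : ℕ) (A : Polynomial Fq) : ℝ :=
  ∏ᶠ P ∈ {P : Polynomial Fq | IsMonicPrime P ∧ P ∣ A}, locAlphaNeg X P (multP P A)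

/-- The cosine integral `Ci(y) = -∫_y^∞ cos t / t dt`. -/
def Ci (y : ℝ) : ℝ := -∫ t : ℝ in Set.Ioi y, Real.cos t / t

open Classical in
/-- The greatest common monic divisor of two polynomials. -/
def gcdP (A B : Polynomial Fq) : Polynomial Fq :=
  Polynomial.C ((EuclideanDomain.gcd A B).leadingCoeff)⁻¹ * EuclideanDomain.gcd A B

/-- The decomposition shape of Lemma `A₁A₂A₃ = B₁B₂B₃`: all factors monic, the
coprimality conditions `gcd(V_{i,j}, V_{k,l}) = 1` for `i ≠ k` and `j ≠ l`, and the six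
product equations. -/
def Decomp3 (A1 A2 A3 B1 B2 B3 G1 G2 G3 V12 V13 V21 V23 V31 V32 : Polynomial Fq) : Prop :=
  G1.Monic ∧ G2.Monic ∧ G3.Monic ∧ V12.Monic ∧ V13.Monic ∧ V21.Monic ∧
    V23.Monic ∧ V31.Monic ∧ V32.Monic ∧
  IsCoprime V12 V21 ∧ IsCoprime V12 V23 ∧ IsCoprime V12 V31 ∧
  IsCoprime V13 V21 ∧ IsCoprime V13 V31 ∧ IsCoprime V13 V32 ∧
  IsCoprime V21 V32 ∧ IsCoprime V23 V31 ∧ IsCoprime V23 V32 ∧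
  A1 = G1 * V12 * V13 ∧ B1 = G1 * V21 * V31 ∧
  A2 = G2 * V21 * V23 ∧ B2 = G2 * V12 * V32 ∧
  A3 = G3 * V31 * V32 ∧ B3 = G3 * V13 * V23

section Helpers

set_option linter.unusedSectionVars false

lemma IsMonicPrime.natDegree_pos {P : Polynomial Fq} (hP : IsMonicPrime P) : 0 < P.natDegree :=
  hP.2.natDegree_pos

lemma IsMonicPrime.eq_of_dvd {P Q : Polynomial Fq} (hP : IsMonicPrime P) (hQ : IsMonicPrime Q)
    (h : P ∣ Q) : P = Q :=
  Polynomial.eq_of_monic_of_associated hP.1 hQ.1 (hP.2.associated_of_dvd hQ.2 h)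

lemma pow_dvd_iff_le_multP {P A : Polynomial Fq} (hP : IsMonicPrime P) (hA : A ≠ 0) (k : ℕ) :
    P ^ k ∣ A ↔ k ≤ multP P A := by
  classical
  have hdeg : ∀ k, P ^ k ∣ A → k ≤ A.natDegree := by
    intro k hk
    have h1 := Polynomial.natDegree_le_of_dvd hk hA
    rw [Polynomial.natDegree_pow] at h1
    have := hP.natDegree_pos
    nlinarith
  unfold multP
  rw [if_neg hA]
  constructor
  · intro h
    exact Nat.le_findGreatest (hdeg k h) h
  · intro h
    have h0 : P ^ (Nat.findGreatest (fun e => P ^ e ∣ A) A.natDegree) ∣ A :=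
      Nat.findGreatest_spec (P := fun e => P ^ e ∣ A) (m := 0) (Nat.zero_le _) (by simp)
    exact (pow_dvd_pow P h).trans h0

/-- The polynomial with prescribed exponents. -/
def mkP {ι : Type} [Fintype ι] (p : ι → Polynomial Fq) (f : ι → ℕ) : Polynomial Fq :=
  ∏ i, p i ^ f i

variable {ι : Type} [Fintype ι] {p : ι → Polynomial Fq}

lemma mkP_monic (hp : ∀ i, IsMonicPrime (p i)) (f : ι → ℕ) : (mkP p f).Monic :=
  Polynomial.monic_prod_of_monic _ _ fun i _ => (hp i).1.pow _

lemma mkP_mul (f g : ι → ℕ) : mkP p f * mkP p g = mkP p (fun i => f i + g i) := by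
  simp only [mkP, pow_add, Finset.prod_mul_distrib]

lemma dvd_mkP (hp : ∀ i, IsMonicPrime (p i)) (f : ι → ℕ) {P : Polynomial Fq}
    (hP : IsMonicPrime P) (h : P ∣ mkP p f) : ∃ i, P = p i := by
  obtain ⟨i, -, hi⟩ := (hP.2.prime.dvd_finsetProd_iff _).1 h
  exact ⟨i, hP.eq_of_dvd (hp i) (hP.2.prime.dvd_of_dvd_pow hi)⟩

lemma pow_dvd_mkP (hp : ∀ i, IsMonicPrime (p i)) (hinj : Function.Injective p) (f : ι → ℕ)
    (i : ι) (k : ℕ) : p i ^ k ∣ mkP p f ↔ k ≤ f i := by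
  classical
  constructor
  · intro h
    by_contra hlt
    push Not at hlt
    have h1 : p i ^ (f i + 1) ∣ mkP p f := (pow_dvd_pow _ hlt).trans h
    unfold mkP at h1
    rw [← Finset.mul_prod_erase _ _ (Finset.mem_univ i), pow_succ] at h1
    have h2 := (mul_dvd_mul_iff_left (pow_ne_zero _ (hp i).1.ne_zero)).1 h1
    obtain ⟨j, hj, hd⟩ := ((hp i).2.prime.dvd_finsetProd_iff _).1 h2
    have := (hp i).eq_of_dvd (hp j) ((hp i).2.prime.dvd_of_dvd_pow hd)
    exact (Finset.ne_of_mem_erase hj) (hinj this).symm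
  · intro h
    exact (pow_dvd_pow _ h).trans (Finset.dvd_prod_of_mem (fun i => p i ^ f i) (Finset.mem_univ i))

lemma multP_mkP (hp : ∀ i, IsMonicPrime (p i)) (hinj : Function.Injective p) (f : ι → ℕ)
    (i : ι) : multP (p i) (mkP p f) = f i := by
  apply le_antisymm
  · rw [← pow_dvd_mkP hp hinj, pow_dvd_iff_le_multP (hp i) (mkP_monic hp f).ne_zero]
  · rw [← pow_dvd_iff_le_multP (hp i) (mkP_monic hp f).ne_zero, pow_dvd_mkP hp hinj]

lemma mkP_injective (hp : ∀ i, IsMonicPrime (p i)) (hinj : Function.Injective p) {f g : ι → ℕ}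
    (h : mkP p f = mkP p g) : f = g := by
  funext i
  rw [← multP_mkP hp hinj f, h, multP_mkP hp hinj]

lemma coprime_of_ne {P Q : Polynomial Fq} (hP : IsMonicPrime P) (hQ : IsMonicPrime Q)
    (h : P ≠ Q) : IsCoprime P Q := by
  rw [hP.2.coprime_iff_not_dvd]
  exact fun hd => h (hP.eq_of_dvd hQ hd)

lemma exists_monicPrime_dvd {A : Polynomial Fq} (hA : A.Monic) (h1 : A ≠ 1) :
    ∃ P, IsMonicPrime P ∧ P ∣ A := by
  have hu : ¬ IsUnit A := fun hu => h1 (hA.eq_one_of_isUnit hu)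
  obtain ⟨P, hm, hP, hd⟩ := Polynomial.exists_monic_irreducible_factor A hu
  exact ⟨P, ⟨hm, hP⟩, hd⟩

lemma eq_mkP (hp : ∀ i, IsMonicPrime (p i)) (hinj : Function.Injective p)
    {A : Polynomial Fq} (hA : A.Monic) (h : ∀ P, IsMonicPrime P → P ∣ A → ∃ i, P = p i) :
    A = mkP p (fun i => multP (p i) A) := by
  have hd : mkP p (fun i => multP (p i) A) ∣ A := by
    apply Finset.prod_dvd_of_coprime
    · intro i _ j _ hij
      exact (coprime_of_ne (hp i) (hp j) (fun e => hij (hinj e))).pow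
    · intro i _
      exact (pow_dvd_iff_le_multP (hp i) hA.ne_zero _).2 le_rfl
  obtain ⟨c, hc⟩ := hd
  have hcm : c.Monic := (mkP_monic hp _).of_mul_monic_left (hc ▸ hA)
  by_cases h1 : c = 1
  · rw [h1, mul_one] at hc; exact hc
  · exfalso
    obtain ⟨P, hP, hPc⟩ := exists_monicPrime_dvd hcm h1
    obtain ⟨i, rfl⟩ := h P hP (hc ▸ hPc.mul_left _)
    have h2 : p i ^ (multP (p i) A + 1) ∣ A := by
      conv_rhs => rw [hc]
      rw [pow_succ]
      exact mul_dvd_mul ((pow_dvd_mkP hp hinj _ i _).2 le_rfl) hPc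
    rw [pow_dvd_iff_le_multP (hp i) hA.ne_zero] at h2
    omega

lemma alphaNeg_mkP (hp : ∀ i, IsMonicPrime (p i)) (hinj : Function.Injective p) (X : ℕ)
    (f : ι → ℕ) : alphaNeg X (mkP p f) = ∏ i, locAlphaNeg X (p i) (f i) := by
  classical
  have h1 : {P : Polynomial Fq | IsMonicPrime P ∧ P ∣ mkP p f} =
      ((Finset.univ.filter (fun i => f i ≠ 0)).image p : Finset (Polynomial Fq)) := by
    ext P
    simp only [Set.mem_ofPred_eq, Finset.coe_image, Finset.coe_filter, Finset.mem_univ, true_and,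
      Set.mem_image]
    constructor
    · rintro ⟨hP, hd⟩
      obtain ⟨i, rfl⟩ := dvd_mkP hp f hP hd
      refine ⟨i, ?_, rfl⟩
      have := (pow_dvd_mkP hp hinj f i 1).1 (by simpa using hd)
      omega
    · rintro ⟨i, hi, rfl⟩
      refine ⟨hp i, ?_⟩
      have := (pow_dvd_mkP hp hinj f i 1).2 (by omega)
      simpa using this
  unfold alphaNeg
  rw [h1, finprod_mem_coe_finset, Finset.prod_image (fun a _ b _ h => hinj h)]
  rw [Finset.prod_filter]
  apply Finset.prod_congr rfl
  intro i _
  rw [multP_mkP hp hinj]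
  split_ifs with h
  · rfl
  · simp [locAlphaNeg, not_not.1 h]

lemma absP_monic {A : Polynomial Fq} (hA : A.Monic) :
    absP A = (Fintype.card Fq : ℝ) ^ A.natDegree := by
  simp [absP, hA.ne_zero]

lemma natDegree_mkP (hp : ∀ i, IsMonicPrime (p i)) (f : ι → ℕ) :
    (mkP p f).natDegree = ∑ i, f i * (p i).natDegree := by
  unfold mkP
  rw [Polynomial.natDegree_prod_of_monic _ _ fun i _ => (hp i).1.pow _]
  simp

lemma pow_natDegree_mkP (hp : ∀ i, IsMonicPrime (p i)) (f : ι → ℕ) (y : ℝ) :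
    y ^ (mkP p f).natDegree = ∏ i, (y ^ (p i).natDegree) ^ f i := by
  rw [natDegree_mkP hp, ← Finset.prod_pow_eq_pow_sum]
  simp [← pow_mul, mul_comm]

lemma coprime_mkP (hp : ∀ i, IsMonicPrime (p i)) (f : ι → ℕ) {V : Polynomial Fq}
    (hV : ∀ i, ¬ p i ∣ V) : IsCoprime (mkP p f) V := by
  apply IsCoprime.prod_left
  intro i _
  exact ((hp i).2.coprime_iff_not_dvd.2 (hV i)).pow_left

lemma coprime_mkP_mkP (hp : ∀ i, IsMonicPrime (p i)) (hinj : Function.Injective p) (f g : ι → ℕ) :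
    IsCoprime (mkP p f) (mkP p g) ↔ ∀ i, f i = 0 ∨ g i = 0 := by
  constructor
  · intro h i
    by_contra hc
    push Not at hc
    have h1 := (pow_dvd_mkP hp hinj f i 1).2 (by omega)
    have h2 := (pow_dvd_mkP hp hinj g i 1).2 (by omega)
    rw [pow_one] at h1 h2
    exact (hp i).2.not_isUnit (h.isUnit_of_dvd' h1 h2)
  · intro h
    apply IsCoprime.prod_left
    intro i _
    apply IsCoprime.prod_right
    intro j _
    by_cases hij : i = j
    · subst hij
      rcases h i with h | h <;> rw [h, pow_zero]
      · exact isCoprime_one_left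
      · exact isCoprime_one_right
    · exact (coprime_of_ne (hp i) (hp j) (fun e => hij (hinj e))).pow

lemma abs_locAlphaNeg_le (X : ℕ) (P : Polynomial Fq) (m : ℕ) : |locAlphaNeg X P m| ≤ 1 := by
  unfold locAlphaNeg
  split_ifs <;> norm_num [abs_of_pos]

lemma locAlphaNeg_big (X : ℕ) (P : Polynomial Fq) {m : ℕ} (h : 4 ≤ m) :
    locAlphaNeg X P m = 0 := by
  unfold locAlphaNeg
  split_ifs <;> first | rfl | omega

lemma local_sum {X : ℕ} {P : Polynomial Fq} (hP : P.natDegree ≤ X) {y : ℝ} :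
    ∑ x : Fin 4 × Fin 4, locAlphaNeg X P x.1 * locAlphaNeg X P x.2 * y ^ (max (x.1 : ℕ) x.2) =
      (1 - y) * (if 2 * P.natDegree ≤ X then 1 else 1 + y ^ 2 / 4) := by
  have hn : ¬ X < P.natDegree := by omega
  rw [Fintype.sum_prod_type]
  by_cases h : 2 * P.natDegree ≤ X
  · simp [Fin.sum_univ_four, locAlphaNeg, hn, h]; ring
  · simp [Fin.sum_univ_four, locAlphaNeg, hn, h]; ring

lemma local_abs_sum {y : ℝ} (hy : 0 ≤ y) (hy1 : y ≤ 1) :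
    ∑ x : Fin 4 × Fin 4, y ^ (max (x.1 : ℕ) x.2) ≤ 1 + 15 * y := by
  have h2 : y ^ 2 ≤ y := by nlinarith
  have h3 : y ^ 3 ≤ y := by nlinarith
  rw [Fintype.sum_prod_type]
  simp [Fin.sum_univ_four]
  linarith

/-- The triple `(H, S, T)` attached to a choice of local exponents of `HS` and `HT`. -/
def PhiP (p : ι → Polynomial Fq) (g : ι → Fin 4 × Fin 4) :
    Polynomial Fq × Polynomial Fq × Polynomial Fq :=
  (mkP p (fun i => min ((g i).1 : ℕ) (g i).2),
    mkP p (fun i => ((g i).1 : ℕ) - min ((g i).1 : ℕ) (g i).2),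
    mkP p (fun i => ((g i).2 : ℕ) - min ((g i).1 : ℕ) (g i).2))

lemma PhiP_HS (g : ι → Fin 4 × Fin 4) :
    (PhiP p g).1 * (PhiP p g).2.1 = mkP p (fun i => ((g i).1 : ℕ)) := by
  simp only [PhiP, mkP_mul]
  congr 1; funext i; omega

lemma PhiP_HT (g : ι → Fin 4 × Fin 4) :
    (PhiP p g).1 * (PhiP p g).2.2 = mkP p (fun i => ((g i).2 : ℕ)) := by
  simp only [PhiP, mkP_mul]
  congr 1; funext i; omega

lemma PhiP_HST (g : ι → Fin 4 × Fin 4) :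
    (PhiP p g).1 * (PhiP p g).2.1 * (PhiP p g).2.2 =
      mkP p (fun i => max ((g i).1 : ℕ) (g i).2) := by
  simp only [PhiP, mkP_mul]
  congr 1; funext i; omega

lemma PhiP_injective (hp : ∀ i, IsMonicPrime (p i)) (hinj : Function.Injective p) :
    Function.Injective (PhiP p) := by
  intro g g' h
  have h1 : mkP p (fun i => ((g i).1 : ℕ)) = mkP p (fun i => ((g' i).1 : ℕ)) := by
    rw [← PhiP_HS, ← PhiP_HS, h]
  have h2 : mkP p (fun i => ((g i).2 : ℕ)) = mkP p (fun i => ((g' i).2 : ℕ)) := by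
    rw [← PhiP_HT, ← PhiP_HT, h]
  funext i
  exact Prod.ext (Fin.ext (congrFun (mkP_injective hp hinj h1) i))
    (Fin.ext (congrFun (mkP_injective hp hinj h2) i))

open Classical in
lemma sum_reindex [DecidableEq ι] (hp : ∀ i, IsMonicPrime (p i)) (hinj : Function.Injective p)
    {X r : ℕ} {V : Polynomial Fq}
    (hr : ∀ P, (IsMonicPrime P ∧ P.natDegree ≤ X ∧ ¬ P ∣ V) ↔ ∃ i, P = p i) :
    ∑ᶠ t ∈ {t : Polynomial Fq × Polynomial Fq × Polynomial Fq |
          t.1.Monic ∧ t.2.1.Monic ∧ t.2.2.Monic ∧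
          SmoothM X (t.1 * t.2.1 * t.2.2) ∧
          IsCoprime t.2.1 t.2.2 ∧
          IsCoprime (t.1 * t.2.1 * t.2.2) V ∧
          10 * (t.1 * t.2.1).natDegree ≤ r ∧
          10 * (t.1 * t.2.2).natDegree ≤ r},
        alphaNeg X (t.1 * t.2.1) * alphaNeg X (t.1 * t.2.2) /
          absP (t.1 * t.2.1 * t.2.2) =
    ∑ g : ι → Fin 4 × Fin 4 with
        10 * (mkP p (fun i => ((g i).1 : ℕ))).natDegree ≤ r ∧
        10 * (mkP p (fun i => ((g i).2 : ℕ))).natDegree ≤ r,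
      ∏ i, (locAlphaNeg X (p i) (g i).1 * locAlphaNeg X (p i) (g i).2 *
        (((Fintype.card Fq : ℝ)⁻¹) ^ (p i).natDegree) ^ (max ((g i).1 : ℕ) (g i).2)) := by
  have hpV : ∀ i, ¬ p i ∣ V := fun i => ((hr (p i)).2 ⟨i, rfl⟩).2.2
  have hpX : ∀ i, (p i).natDegree ≤ X := fun i => ((hr (p i)).2 ⟨i, rfl⟩).2.1
  set F : Polynomial Fq × Polynomial Fq × Polynomial Fq → ℝ := fun t =>
    alphaNeg X (t.1 * t.2.1) * alphaNeg X (t.1 * t.2.2) / absP (t.1 * t.2.1 * t.2.2) with hF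
  have hFPhi : ∀ g : ι → Fin 4 × Fin 4, F (PhiP p g) =
      ∏ i, (locAlphaNeg X (p i) (g i).1 * locAlphaNeg X (p i) (g i).2 *
        (((Fintype.card Fq : ℝ)⁻¹) ^ (p i).natDegree) ^ (max ((g i).1 : ℕ) (g i).2)) := by
    intro g
    simp only [hF]
    rw [PhiP_HST, PhiP_HS, PhiP_HT, alphaNeg_mkP hp hinj, alphaNeg_mkP hp hinj,
      absP_monic (mkP_monic hp _), div_eq_mul_inv, ← inv_pow, pow_natDegree_mkP hp,
      Finset.prod_mul_distrib, Finset.prod_mul_distrib]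
  set G : Finset (ι → Fin 4 × Fin 4) := Finset.univ.filter (fun g =>
        10 * (mkP p (fun i => ((g i).1 : ℕ))).natDegree ≤ r ∧
        10 * (mkP p (fun i => ((g i).2 : ℕ))).natDegree ≤ r) with hG
  rw [finsum_mem_eq_sum_of_inter_support_eq F (t := G.image (PhiP p))]
  · rw [Finset.sum_image (fun a _ b _ h => PhiP_injective hp hinj h)]
    exact Finset.sum_congr rfl fun g _ => hFPhi g
  · ext t
    simp only [Set.mem_inter_iff, Set.mem_ofPred_eq, Function.mem_support, Finset.coe_image,
      Set.mem_image, Finset.mem_coe, and_congr_left_iff]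
    intro hne
    constructor
    · rintro ⟨hH, hS, hT, hsm, hco, hcoV, hd1, hd2⟩
      have key : ∀ A : Polynomial Fq, A.Monic → A ∣ t.1 * t.2.1 * t.2.2 →
          A = mkP p (fun i => multP (p i) A) := by
        intro A hA hdvd
        apply eq_mkP hp hinj hA
        intro P hP hPA
        apply (hr P).1
        refine ⟨hP, hsm.2 P hP (hPA.trans hdvd), fun hPV => ?_⟩
        exact hP.2.not_isUnit (hcoV.isUnit_of_dvd' (hPA.trans hdvd) hPV)
      have eH := key t.1 hH ((dvd_mul_right _ _).mul_right _)
      have eS := key t.2.1 hS ((dvd_mul_left _ _).mul_right _)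
      have eT := key t.2.2 hT (dvd_mul_left _ _)
      obtain ⟨H, S, T⟩ := t
      dsimp only at *
      set h := fun i => multP (p i) H with hh
      set s := fun i => multP (p i) S with hs
      set u := fun i => multP (p i) T with hu
      have hst : ∀ i, s i = 0 ∨ u i = 0 := by
        rw [← coprime_mkP_mkP hp hinj, ← eS, ← eT]; exact hco
      have e1 : H * S = mkP p (fun i => h i + s i) := by rw [← mkP_mul, ← eH, ← eS]
      have e2 : H * T = mkP p (fun i => h i + u i) := by rw [← mkP_mul, ← eH, ← eT]
      have hne1 : alphaNeg X (H * S) ≠ 0 := by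
        intro h0; apply hne; simp only [hF]; rw [h0]; simp
      have hne2 : alphaNeg X (H * T) ≠ 0 := by
        intro h0; apply hne; simp only [hF]; rw [h0]; simp
      rw [e1, alphaNeg_mkP hp hinj, Finset.prod_ne_zero_iff] at hne1
      rw [e2, alphaNeg_mkP hp hinj, Finset.prod_ne_zero_iff] at hne2
      have l1 : ∀ i, h i + s i < 4 := by
        intro i; by_contra hc
        exact hne1 i (Finset.mem_univ _) (locAlphaNeg_big _ _ (by omega))
      have l2 : ∀ i, h i + u i < 4 := by
        intro i; by_contra hc
        exact hne2 i (Finset.mem_univ _) (locAlphaNeg_big _ _ (by omega))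
      refine ⟨fun i => (⟨h i + s i, l1 i⟩, ⟨h i + u i, l2 i⟩), ?_, ?_⟩
      · rw [hG, Finset.mem_filter]
        refine ⟨Finset.mem_univ _, ?_, ?_⟩
        · rw [← e1]; exact hd1
        · rw [← e2]; exact hd2
      · simp only [PhiP]
        refine Prod.ext ?_ (Prod.ext ?_ ?_)
        · dsimp only; rw [eH]; congr 1; funext i; have := hst i; omega
        · dsimp only; rw [eS]; congr 1; funext i; have := hst i; omega
        · dsimp only; rw [eT]; congr 1; funext i; have := hst i; omega
    · rintro ⟨g, hg, rfl⟩
      rw [hG, Finset.mem_filter] at hg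
      refine ⟨mkP_monic hp _, mkP_monic hp _, mkP_monic hp _, ?_, ?_, ?_, ?_, ?_⟩
      · rw [PhiP_HST]
        refine ⟨mkP_monic hp _, fun P hP hd => ?_⟩
        obtain ⟨i, rfl⟩ := dvd_mkP hp _ hP hd
        exact hpX i
      · rw [PhiP, coprime_mkP_mkP hp hinj]
        intro i; omega
      · rw [PhiP_HST]; exact coprime_mkP hp _ hpV
      · rw [PhiP_HS]; exact hg.2.1
      · rw [PhiP_HT]; exact hg.2.2

lemma prod_eq_sum [DecidableEq ι] (φ : ι → Fin 4 × Fin 4 → ℝ) :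
    ∑ g : ι → Fin 4 × Fin 4, ∏ i, φ i (g i) = ∏ i, ∑ x, φ i x := by
  rw [Finset.prod_univ_sum, Fintype.piFinset_univ]

lemma one_lt_cardR : (1 : ℝ) < (Fintype.card Fq : ℝ) := by
  exact_mod_cast Fintype.one_lt_card

lemma tail_bound (hp : ∀ i, IsMonicPrime (p i)) {X r : ℕ} {s : ℝ} (hs : 1 < s)
    (hsq : s ^ 2 = (Fintype.card Fq : ℝ)) (g : ι → Fin 4 × Fin 4)
    (hg : ¬ (10 * (mkP p (fun i => ((g i).1 : ℕ))).natDegree ≤ r ∧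
        10 * (mkP p (fun i => ((g i).2 : ℕ))).natDegree ≤ r)) :
    |∏ i, (locAlphaNeg X (p i) (g i).1 * locAlphaNeg X (p i) (g i).2 *
        (((Fintype.card Fq : ℝ)⁻¹) ^ (p i).natDegree) ^ (max ((g i).1 : ℕ) (g i).2))| ≤
      (Fintype.card Fq : ℝ) ^ (-(r : ℝ) / 20) *
        ∏ i, (s⁻¹ ^ (p i).natDegree) ^ (max ((g i).1 : ℕ) (g i).2) := by
  have hs0 : 0 < s := by linarith
  set N := (mkP p (fun i => max ((g i).1 : ℕ) (g i).2)).natDegree with hN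
  have hNr : r < 10 * N := by
    have h1 : (mkP p (fun i => ((g i).1 : ℕ))).natDegree ≤ N := by
      rw [hN, natDegree_mkP hp, natDegree_mkP hp]
      exact Finset.sum_le_sum fun i _ => Nat.mul_le_mul_right _ (le_max_left _ _)
    have h2 : (mkP p (fun i => ((g i).2 : ℕ))).natDegree ≤ N := by
      rw [hN, natDegree_mkP hp, natDegree_mkP hp]
      exact Finset.sum_le_sum fun i _ => Nat.mul_le_mul_right _ (le_max_right _ _)
    omega
  rw [Finset.prod_mul_distrib, ← pow_natDegree_mkP hp, ← pow_natDegree_mkP hp, ← hN, ← hsq,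
    abs_mul, Finset.abs_prod]
  have h1 : ∏ i, |locAlphaNeg X (p i) (g i).1 * locAlphaNeg X (p i) (g i).2| ≤ 1 := by
    apply Finset.prod_le_one
    · intro i _; positivity
    · intro i _
      rw [abs_mul]
      exact mul_le_one₀ (abs_locAlphaNeg_le _ _ _) (abs_nonneg _) (abs_locAlphaNeg_le _ _ _)
  have h2 : s⁻¹ ^ N ≤ (s ^ 2) ^ (-(r : ℝ) / 20) := by
    rw [← Real.rpow_natCast s 2, ← Real.rpow_mul hs0.le, inv_pow, ← Real.rpow_natCast s N,
      ← Real.rpow_neg hs0.le]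
    apply Real.rpow_le_rpow_of_exponent_le hs.le
    have : (r : ℝ) < 10 * N := by exact_mod_cast hNr
    push_cast; linarith
  have h3 : |((s ^ 2)⁻¹) ^ N| = s⁻¹ ^ N * s⁻¹ ^ N := by
    rw [abs_of_pos (by positivity), ← inv_pow]; ring
  rw [h3]
  calc _ ≤ 1 * (s⁻¹ ^ N * s⁻¹ ^ N) := by gcongr
    _ ≤ _ := by rw [one_mul]; gcongr

lemma card_monic_le (Q : Finset (Polynomial Fq)) (d : ℕ) (hQ : ∀ P ∈ Q, P.Monic ∧ P.natDegree = d) :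
    Q.card ≤ Fintype.card Fq ^ d := by
  classical
  have : Q.card ≤ (Finset.univ : Finset (Fin d → Fq)).card := by
    apply Finset.card_le_card_of_injOn (fun P (i : Fin d) => P.coeff i) (by simp)
    intro A hA B hB h
    obtain ⟨mA, dA⟩ := hQ A hA
    obtain ⟨mB, dB⟩ := hQ B hB
    ext n
    rcases lt_trichotomy n d with h1 | h1 | h1
    · exact congrFun h ⟨n, h1⟩
    · have a1 := mA.coeff_natDegree
      have b1 := mB.coeff_natDegree
      rw [dA] at a1; rw [dB] at b1
      rw [h1, a1, b1]
    · rw [Polynomial.coeff_eq_zero_of_natDegree_lt (by omega),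
        Polynomial.coeff_eq_zero_of_natDegree_lt (by omega)]
  simpa using this

lemma finite_monic_le (X : ℕ) : {P : Polynomial Fq | P.Monic ∧ P.natDegree ≤ X}.Finite := by
  apply Set.Finite.of_injOn (f := fun P (i : Fin (X + 1)) => P.coeff i)
    (t := (Set.univ : Set (Fin (X + 1) → Fq))) (by intro _ _; trivial) _ Set.finite_univ
  intro A hA B hB h
  obtain ⟨-, dA⟩ := hA
  obtain ⟨-, dB⟩ := hB
  ext n
  rcases lt_or_ge n (X + 1) with h1 | h1
  · exact congrFun h ⟨n, h1⟩
  · rw [Polynomial.coeff_eq_zero_of_natDegree_lt (by omega),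
        Polynomial.coeff_eq_zero_of_natDegree_lt (by omega)]

lemma sum_deg_le (hp : ∀ i, IsMonicPrime (p i)) (hinj : Function.Injective p) (J : Finset ι)
    (I : Finset ℕ) (hI : ∀ i ∈ J, (p i).natDegree ∈ I) (φ : ℕ → ℝ) (hφ : ∀ d, 0 ≤ φ d) :
    ∑ i ∈ J, φ (p i).natDegree ≤ ∑ d ∈ I, (Fintype.card Fq : ℝ) ^ d * φ d := by
  classical
  rw [← Finset.sum_fiberwise_of_maps_to hI]
  apply Finset.sum_le_sum
  intro d _
  rw [Finset.sum_congr rfl (g := fun _ => φ d)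
    (by intro i hi; rw [(Finset.mem_filter.1 hi).2]), Finset.sum_const, nsmul_eq_mul]
  apply mul_le_mul_of_nonneg_right _ (hφ d)
  have h := card_monic_le ((J.filter (fun i => (p i).natDegree = d)).image p) d (by
    intro P hP
    obtain ⟨i, hi, rfl⟩ := Finset.mem_image.1 hP
    exact ⟨(hp i).1, (Finset.mem_filter.1 hi).2⟩)
  rw [Finset.card_image_of_injective _ hinj] at h
  exact_mod_cast h

lemma U_bound (hp : ∀ i, IsMonicPrime (p i)) (hinj : Function.Injective p) {X r : ℕ}
    (hpX : ∀ i, (p i).natDegree ≤ X) {s : ℝ} (hs : 1 < s)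
    (hsq : s ^ 2 = (Fintype.card Fq : ℝ)) (hXr : (Fintype.card Fq : ℝ) ^ X ≤ r) :
    ∑ i, s⁻¹ ^ (p i).natDegree ≤ s / (s - 1) * Real.sqrt r := by
  have hs0 : 0 < s := by linarith
  refine (sum_deg_le hp hinj Finset.univ (Finset.range (X + 1))
    (fun i _ => Finset.mem_range.2 (Nat.lt_succ_of_le (hpX i))) (fun d => s⁻¹ ^ d)
    (fun d => by positivity)).trans ?_
  have h1 : ∀ d ∈ Finset.range (X + 1), (Fintype.card Fq : ℝ) ^ d * s⁻¹ ^ d = s ^ d := by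
    intro d _
    rw [← hsq, ← mul_pow]; congr 1; field_simp
  rw [Finset.sum_congr rfl h1, geom_sum_eq hs.ne']
  have h2 : s ^ X ≤ Real.sqrt r := by
    apply Real.le_sqrt_of_sq_le
    rw [← pow_mul, mul_comm, pow_mul, hsq]; exact hXr
  have h3 : 0 < s - 1 := by linarith
  calc (s ^ (X + 1) - 1) / (s - 1) ≤ (s ^ (X + 1)) / (s - 1) := by gcongr; linarith
    _ = s / (s - 1) * s ^ X := by rw [pow_succ]; ring
    _ ≤ _ := by gcongr

lemma W_bound (hp : ∀ i, IsMonicPrime (p i)) (hinj : Function.Injective p) {X : ℕ}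
    (hpX : ∀ i, (p i).natDegree ≤ X) (J : Finset ι) (hJ : ∀ i ∈ J, X < 2 * (p i).natDegree) :
    ∑ i ∈ J, (((Fintype.card Fq : ℝ)⁻¹ ^ (p i).natDegree) ^ 2 / 4) ≤
      (Fintype.card Fq : ℝ) ^ (-(X : ℝ) / 2) / 2 := by
  have hq2 : (2 : ℝ) ≤ (Fintype.card Fq : ℝ) := by exact_mod_cast Fintype.one_lt_card
  set q := (Fintype.card Fq : ℝ) with hq
  have hq0 : 0 < q := by linarith
  have hqi : q⁻¹ ≤ 1 / 2 := by rw [inv_le_comm₀ hq0 (by norm_num)]; linarith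
  have hqi0 : 0 < q⁻¹ := by positivity
  refine (sum_deg_le hp hinj J (Finset.Ico (X / 2 + 1) (X + 1))
    (fun i hi => Finset.mem_Ico.2 ⟨by have := hJ i hi; omega, Nat.lt_succ_of_le (hpX i)⟩)
    (fun d => (q⁻¹ ^ d) ^ 2 / 4) (fun d => by positivity)).trans ?_
  have h1 : ∀ d ∈ Finset.Ico (X / 2 + 1) (X + 1), q ^ d * ((q⁻¹ ^ d) ^ 2 / 4) = q⁻¹ ^ d * (1 / 4) := by
    intro d _
    rw [inv_pow]; field_simp
  rw [Finset.sum_congr rfl h1, ← Finset.sum_mul]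
  have h2 := geom_sum_Ico_le_of_lt_one (m := X / 2 + 1) (n := X + 1) hqi0.le (by linarith)
  have h3 : q⁻¹ ^ (X / 2 + 1) ≤ q ^ (-(X : ℝ) / 2) := by
    rw [inv_pow, ← Real.rpow_natCast, ← Real.rpow_neg hq0.le]
    apply Real.rpow_le_rpow_of_exponent_le (by linarith)
    have : X ≤ 2 * (X / 2 + 1) := by omega
    have : (X : ℝ) ≤ 2 * ((X / 2 + 1 : ℕ) : ℝ) := by exact_mod_cast this
    linarith
  have h4 : q⁻¹ ^ (X / 2 + 1) / (1 - q⁻¹) ≤ 2 * q⁻¹ ^ (X / 2 + 1) := by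
    rw [div_le_iff₀ (by linarith)]
    have : 0 < q⁻¹ ^ (X / 2 + 1) := by positivity
    nlinarith
  linarith

lemma core {X r : ℕ} (V : Polynomial Fq) {s : ℝ} (hs : 1 < s)
    (hsq : s ^ 2 = (Fintype.card Fq : ℝ)) (hXr : (Fintype.card Fq : ℝ) ^ X ≤ r) :
    ∃ ε : ℝ, |ε| ≤ (Fintype.card Fq : ℝ) ^ (-(X : ℝ) / 2) ∧
    |∑ᶠ t ∈ {t : Polynomial Fq × Polynomial Fq × Polynomial Fq |
          t.1.Monic ∧ t.2.1.Monic ∧ t.2.2.Monic ∧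
          SmoothM X (t.1 * t.2.1 * t.2.2) ∧
          IsCoprime t.2.1 t.2.2 ∧
          IsCoprime (t.1 * t.2.1 * t.2.2) V ∧
          10 * (t.1 * t.2.1).natDegree ≤ r ∧
          10 * (t.1 * t.2.2).natDegree ≤ r},
        alphaNeg X (t.1 * t.2.1) * alphaNeg X (t.1 * t.2.2) /
          absP (t.1 * t.2.1 * t.2.2) - (1 + ε) *
      ∏ᶠ P ∈ {P : Polynomial Fq | IsMonicPrime P ∧ P.natDegree ≤ X ∧ ¬ P ∣ V},
        (1 - (absP P)⁻¹)| ≤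
      (Fintype.card Fq : ℝ) ^ (-(r : ℝ) / 20) * Real.exp (15 * (s / (s - 1) * Real.sqrt r)) ∧
    Real.exp (-(2 * (s / (s - 1) * Real.sqrt r))) ≤
      ∏ᶠ P ∈ {P : Polynomial Fq | IsMonicPrime P ∧ P.natDegree ≤ X ∧ ¬ P ∣ V},
        (1 - (absP P)⁻¹) := by
  classical
  have hs0 : 0 < s := by linarith
  have hsi : s⁻¹ ≤ 1 := inv_le_one_of_one_le₀ hs.le
  have hq2 : (2 : ℝ) ≤ (Fintype.card Fq : ℝ) := by exact_mod_cast Fintype.one_lt_card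
  set D := {P : Polynomial Fq | IsMonicPrime P ∧ P.natDegree ≤ X ∧ ¬ P ∣ V} with hD
  have hDf : D.Finite := (finite_monic_le X).subset fun P hP => ⟨hP.1.1, hP.2.1⟩
  let p : D → Polynomial Fq := Subtype.val
  have hp : ∀ i, IsMonicPrime (p i) := fun i => i.2.1
  have hinj : Function.Injective p := Subtype.val_injective
  have hpX : ∀ i, (p i).natDegree ≤ X := fun i => i.2.2.1
  have hr : ∀ P, (IsMonicPrime P ∧ P.natDegree ≤ X ∧ ¬ P ∣ V) ↔ ∃ i, P = p i :=
    fun P => ⟨fun h => ⟨⟨P, h⟩, rfl⟩, by rintro ⟨i, rfl⟩; exact i.2⟩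
  have : Fintype D := hDf.fintype
  set q := (Fintype.card Fq : ℝ) with hq
  have hq0 : 0 < q := by linarith
  have hPr : ∏ᶠ P ∈ D, (1 - (absP P)⁻¹) = ∏ i : D, (1 - q⁻¹ ^ (p i).natDegree) := by
    rw [finprod_mem_eq_finite_toFinset_prod _ hDf, ← finprod_mem_coe_finset, Set.Finite.coe_toFinset,
      ← finprod_subtype_eq_finprod_cond, finprod_eq_prod_of_fintype]
    apply Finset.prod_congr rfl
    intro i _
    rw [absP_monic i.2.1.1, inv_pow]
  have hU := U_bound hp hinj hpX hs hsq hXr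
  set K := s / (s - 1) * Real.sqrt r with hK
  have hyle : ∀ i : D, q⁻¹ ^ (p i).natDegree ≤ 1 / 2 := by
    intro i
    have hqi : q⁻¹ ≤ 1 / 2 := by rw [inv_le_comm₀ hq0 (by norm_num)]; linarith
    calc q⁻¹ ^ (p i).natDegree ≤ q⁻¹ ^ 1 :=
          pow_le_pow_of_le_one (by positivity) (by linarith) (hp i).natDegree_pos
      _ ≤ 1 / 2 := by simpa using hqi
  rw [hPr, sum_reindex hp hinj hr]
  set w : (D → Fin 4 × Fin 4) → ℝ := fun g =>
    ∏ i, (locAlphaNeg X (p i) (g i).1 * locAlphaNeg X (p i) (g i).2 *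
        (q⁻¹ ^ (p i).natDegree) ^ (max ((g i).1 : ℕ) (g i).2)) with hw
  set c : (D → Fin 4 × Fin 4) → Prop := fun g =>
    10 * (mkP p (fun i => ((g i).1 : ℕ))).natDegree ≤ r ∧
        10 * (mkP p (fun i => ((g i).2 : ℕ))).natDegree ≤ r with hc
  set E : ℝ := ∏ i : D, (if 2 * (p i).natDegree ≤ X then (1 : ℝ)
      else 1 + (q⁻¹ ^ (p i).natDegree) ^ 2 / 4) with hE
  have htot : ∑ g, w g = (∏ i : D, (1 - q⁻¹ ^ (p i).natDegree)) * E := by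
    rw [hE, ← Finset.prod_mul_distrib]
    simp only [hw]
    rw [prod_eq_sum (fun (i : D) x => locAlphaNeg X (p i) x.1 * locAlphaNeg X (p i) x.2 *
        (q⁻¹ ^ (p i).natDegree) ^ (max (x.1 : ℕ) x.2))]
    exact Finset.prod_congr rfl fun i _ => local_sum (hpX i)
  refine ⟨E - 1, ?_, ?_, ?_⟩
  · set W := ∑ i ∈ Finset.univ.filter (fun i : D => ¬ 2 * (p i).natDegree ≤ X),
      ((q⁻¹ ^ (p i).natDegree) ^ 2 / 4) with hWdef
    have hW : W ≤ q ^ (-(X : ℝ) / 2) / 2 :=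
      W_bound hp hinj hpX _ (fun i hi => not_le.1 (Finset.mem_filter.1 hi).2)
    have hW0 : 0 ≤ W := Finset.sum_nonneg fun i _ => by positivity
    have hE' : E = ∏ i ∈ Finset.univ.filter (fun i : D => ¬ 2 * (p i).natDegree ≤ X),
        (1 + (q⁻¹ ^ (p i).natDegree) ^ 2 / 4) := by
      rw [hE, Finset.prod_filter]
      exact Finset.prod_congr rfl fun i _ => by by_cases h : 2 * (p i).natDegree ≤ X <;> simp [h]
    have h1 : 1 ≤ E := by
      rw [hE']
      refine le_of_eq_of_le (Finset.prod_const_one (s := Finset.univ.filter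
        (fun i : D => ¬ 2 * (p i).natDegree ≤ X))).symm ?_
      apply Finset.prod_le_prod (fun _ _ => zero_le_one)
      intro i _
      have : 0 ≤ (q⁻¹ ^ (p i).natDegree) ^ 2 / 4 := by positivity
      linarith
    have h2 : E ≤ Real.exp W := by
      rw [hE', hWdef, Real.exp_sum]
      apply Finset.prod_le_prod
      · intro i _; positivity
      · intro i _; rw [add_comm]; exact Real.add_one_le_exp _
    have h3 : q ^ (-(X : ℝ) / 2) ≤ 1 :=
      Real.rpow_le_one_of_one_le_of_nonpos (by linarith)
        (by have : (0 : ℝ) ≤ X := by positivity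
            linarith)
    have h4 := Real.abs_exp_sub_one_le (x := W) (by rw [abs_of_nonneg hW0]; linarith)
    rw [abs_of_nonneg hW0] at h4
    have h5 := le_abs_self (Real.exp W - 1)
    rw [abs_of_nonneg (by linarith)]
    linarith
  · have hsplit := Finset.sum_filter_add_sum_filter_not Finset.univ c w
    have e1 : (∑ g with c g, w g) - (1 + (E - 1)) * ∏ i : D, (1 - q⁻¹ ^ (p i).natDegree) =
        - ∑ g with ¬ c g, w g := by
      rw [htot] at hsplit; linarith
    convert_to |(∑ g with c g, w g) - (1 + (E - 1)) *
      ∏ i : D, (1 - q⁻¹ ^ (p i).natDegree)| ≤ _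
    rw [e1, abs_neg]
    have hprod0 : ∀ g : D → Fin 4 × Fin 4,
        0 ≤ ∏ i, (s⁻¹ ^ (p i).natDegree) ^ (max ((g i).1 : ℕ) (g i).2) :=
      fun g => Finset.prod_nonneg fun i _ => by positivity
    calc |∑ g with ¬ c g, w g| ≤ ∑ g with ¬ c g, |w g| := Finset.abs_sum_le_sum_abs _ _
      _ ≤ ∑ g with ¬ c g, q ^ (-(r : ℝ) / 20) *
          ∏ i, (s⁻¹ ^ (p i).natDegree) ^ (max ((g i).1 : ℕ) (g i).2) :=
        Finset.sum_le_sum fun g hg => tail_bound hp hs hsq g (Finset.mem_filter.1 hg).2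
      _ ≤ ∑ g : D → Fin 4 × Fin 4, q ^ (-(r : ℝ) / 20) *
          ∏ i, (s⁻¹ ^ (p i).natDegree) ^ (max ((g i).1 : ℕ) (g i).2) :=
        Finset.sum_le_sum_of_subset_of_nonneg (Finset.filter_subset _ _)
          (fun g _ _ => mul_nonneg (by positivity) (hprod0 g))
      _ = q ^ (-(r : ℝ) / 20) * ∏ i : D, ∑ x : Fin 4 × Fin 4,
          (s⁻¹ ^ (p i).natDegree) ^ (max (x.1 : ℕ) x.2) := by
        rw [← Finset.mul_sum, prod_eq_sum (fun (i : D) x =>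
          (s⁻¹ ^ (p i).natDegree) ^ (max (x.1 : ℕ) x.2))]
      _ ≤ q ^ (-(r : ℝ) / 20) * Real.exp (15 * K) := by
        apply mul_le_mul_of_nonneg_left _ (by positivity)
        calc _ ≤ ∏ i : D, Real.exp (15 * s⁻¹ ^ (p i).natDegree) := by
              apply Finset.prod_le_prod
              · intro i _; exact Finset.sum_nonneg fun x _ => by positivity
              · intro i _
                refine (local_abs_sum (by positivity) (pow_le_one₀ (by positivity) hsi)).trans ?_
                rw [add_comm]; exact Real.add_one_le_exp _
          _ = Real.exp (15 * ∑ i : D, s⁻¹ ^ (p i).natDegree) := by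
              rw [← Real.exp_sum, Finset.mul_sum]
          _ ≤ _ := by gcongr
  · calc Real.exp (-(2 * K)) ≤ Real.exp (∑ i : D, -(2 * s⁻¹ ^ (p i).natDegree)) := by
          apply Real.exp_le_exp.2
          rw [Finset.sum_neg_distrib, ← Finset.mul_sum]
          linarith
      _ = ∏ i : D, Real.exp (-(2 * s⁻¹ ^ (p i).natDegree)) := Real.exp_sum _ _
      _ ≤ _ := by
        apply Finset.prod_le_prod
        · intro i _; positivity
        · intro i _
          have h1 := hyle i
          have h0 : 0 < q⁻¹ ^ (p i).natDegree := by positivity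
          have h2 : q⁻¹ ^ (p i).natDegree ≤ s⁻¹ ^ (p i).natDegree := by
            apply pow_le_pow_left₀ (by positivity)
            rw [← hsq]
            apply inv_anti₀ hs0; nlinarith
          calc Real.exp (-(2 * s⁻¹ ^ (p i).natDegree))
              ≤ Real.exp (-(2 * q⁻¹ ^ (p i).natDegree)) := by gcongr
            _ ≤ 1 - q⁻¹ ^ (p i).natDegree := by
              set y := q⁻¹ ^ (p i).natDegree
              rw [Real.exp_neg, inv_le_comm₀ (Real.exp_pos _) (by linarith)]
              have h3 := Real.add_one_le_exp (2 * y)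
              refine le_trans ?_ h3
              rw [inv_le_iff_one_le_mul₀ (by linarith)]
              nlinarith

end Helpers

/-- **Evaluation of the diagonal coefficient sum for the inverse Euler product:**
as `X, deg R → ∞` with `X ≤ log_q (deg R)`, the sum
`∑_{HST ∈ 𝒮_ℳ(X), (S,T)=1, (HST,V)=1, deg HS, deg HT ≤ deg R/10} α₋₁(HS)α₋₁(HT)/|HST|`
equals `(1+O(q^{-X/2})) ∏_{deg P ≤ X, P ∤ V} (1-|P|⁻¹) + O(|R|^{-1/21})`, and in
particular is asymptotic to `∏_{deg P ≤ X, P ∤ V} (1-|P|⁻¹)`. -/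
theorem diagonal_alphaNeg_sum
    (Fq : Type) [Field Fq] [Fintype Fq]
    (Rseq Vseq : ℕ → Polynomial Fq) (Xseq : ℕ → ℕ)
    (hRmonic : ∀ n, (Rseq n).Monic) (hVmonic : ∀ n, (Vseq n).Monic)
    (hX1 : ∀ n, 1 ≤ Xseq n)
    (hXtend : Filter.Tendsto Xseq Filter.atTop Filter.atTop)
    (hRtend : Filter.Tendsto (fun n => (Rseq n).natDegree) Filter.atTop Filter.atTop)
    (hXR : ∀ n, (Fintype.card Fq : ℝ) ^ Xseq n ≤ ((Rseq n).natDegree : ℝ)) :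
    let S : ℕ → ℝ := fun n =>
      ∑ᶠ t ∈ {t : Polynomial Fq × Polynomial Fq × Polynomial Fq |
          t.1.Monic ∧ t.2.1.Monic ∧ t.2.2.Monic ∧
          SmoothM (Xseq n) (t.1 * t.2.1 * t.2.2) ∧
          IsCoprime t.2.1 t.2.2 ∧
          IsCoprime (t.1 * t.2.1 * t.2.2) (Vseq n) ∧
          10 * (t.1 * t.2.1).natDegree ≤ (Rseq n).natDegree ∧
          10 * (t.1 * t.2.2).natDegree ≤ (Rseq n).natDegree},
        alphaNeg (Xseq n) (t.1 * t.2.1) * alphaNeg (Xseq n) (t.1 * t.2.2) /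
          absP (t.1 * t.2.1 * t.2.2)
    let Pr : ℕ → ℝ := fun n =>
      ∏ᶠ P ∈ {P : Polynomial Fq | IsMonicPrime P ∧ P.natDegree ≤ Xseq n ∧ ¬ P ∣ Vseq n},
        (1 - (absP P)⁻¹)
    (∃ C : ℝ, 0 < C ∧ ∀ᶠ n in Filter.atTop, ∃ ε : ℝ,
      |ε| ≤ C * (Fintype.card Fq : ℝ) ^ (-(Xseq n : ℝ) / 2) ∧
      |S n - (1 + ε) * Pr n| ≤ C * absP (Rseq n) ^ (-(1 : ℝ) / 21)) ∧
    Filter.Tendsto (fun n => S n / Pr n) Filter.atTop (nhds 1) := by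
  intro S Pr
  have hq1 : (1 : ℝ) < (Fintype.card Fq : ℝ) := one_lt_cardR
  set q := (Fintype.card Fq : ℝ) with hq
  have hq0 : 0 < q := by linarith
  set s := Real.sqrt q with hsdef
  have hsq : s ^ 2 = q := Real.sq_sqrt hq0.le
  have hs : 1 < s := by rw [hsdef, Real.lt_sqrt (by norm_num)]; simpa using hq1
  set K := s / (s - 1) with hK
  have hK0 : 0 < K := div_pos (by linarith) (by linarith)
  have hlog : 0 < Real.log q := Real.log_pos hq1
  set r : ℕ → ℕ := fun n => (Rseq n).natDegree with hr
  have hcore : ∀ n, ∃ ε : ℝ, |ε| ≤ q ^ (-(Xseq n : ℝ) / 2) ∧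
      |S n - (1 + ε) * Pr n| ≤ q ^ (-(r n : ℝ) / 20) * Real.exp (15 * (K * Real.sqrt (r n))) ∧
      Real.exp (-(2 * (K * Real.sqrt (r n)))) ≤ Pr n :=
    fun n => core (Vseq n) hs hsq (hXR n)
  choose ε h1 h2 h3 using hcore
  have hrR : Filter.Tendsto (fun n => (r n : ℝ)) Filter.atTop Filter.atTop :=
    tendsto_natCast_atTop_atTop.comp hRtend
  have hsqrt : Filter.Tendsto (fun n => Real.sqrt (r n)) Filter.atTop Filter.atTop :=
    Real.tendsto_sqrt_atTop.comp hrR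
  have hev : ∀ᶠ n in Filter.atTop,
      q ^ (-(r n : ℝ) / 20) * Real.exp (17 * (K * Real.sqrt (r n))) ≤ q ^ (-(r n : ℝ) / 21) := by
    filter_upwards [hsqrt.eventually_ge_atTop (17 * K * 420 / Real.log q)] with n hn
    rw [Real.rpow_def_of_pos hq0, Real.rpow_def_of_pos hq0, ← Real.exp_add]
    apply Real.exp_le_exp.2
    rw [div_le_iff₀ hlog] at hn
    have hss : Real.sqrt (r n) * Real.sqrt (r n) = r n := Real.mul_self_sqrt (by positivity)
    have h0 : 0 ≤ Real.sqrt (r n) := Real.sqrt_nonneg _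
    have := mul_le_mul_of_nonneg_right hn h0
    have e : Real.sqrt (r n) * Real.log q * Real.sqrt (r n) = Real.log q * r n := by
      rw [mul_right_comm, hss, mul_comm]
    rw [e] at this
    nlinarith
  have hmono : ∀ n, Real.exp (15 * (K * Real.sqrt (r n))) ≤
      Real.exp (17 * (K * Real.sqrt (r n))) := by
    intro n
    apply Real.exp_le_exp.2
    have : 0 ≤ K * Real.sqrt (r n) := by positivity
    linarith
  have hPr0 : ∀ n, 0 < Pr n := fun n => lt_of_lt_of_le (Real.exp_pos _) (h3 n)
  constructor
  · refine ⟨1, one_pos, ?_⟩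
    filter_upwards [hev] with n hn
    refine ⟨ε n, by rw [one_mul]; exact h1 n, ?_⟩
    have e : absP (Rseq n) ^ (-(1 : ℝ) / 21) = q ^ (-(r n : ℝ) / 21) := by
      rw [absP_monic (hRmonic n), ← Real.rpow_natCast, ← Real.rpow_mul hq0.le]
      congr 1; simp only [hr]; ring
    rw [one_mul, e]
    refine (h2 n).trans (le_trans ?_ hn)
    exact mul_le_mul_of_nonneg_left (hmono n) (by positivity)
  · have hXR' : Filter.Tendsto (fun n => (Xseq n : ℝ)) Filter.atTop Filter.atTop :=
      tendsto_natCast_atTop_atTop.comp hXtend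
    have hgen : ∀ (f : ℕ → ℝ) (c : ℝ), 0 < c → Filter.Tendsto f Filter.atTop Filter.atTop →
        Filter.Tendsto (fun n => q ^ (-(f n) / c)) Filter.atTop (nhds 0) := by
      intro f c hc hf
      have e : (fun n => q ^ (-(f n) / c)) = fun n => Real.exp (-((Real.log q / c) * f n)) := by
        funext n
        rw [Real.rpow_def_of_pos hq0]; congr 1; ring
      rw [e]
      exact Real.tendsto_exp_neg_atTop_nhds_zero.comp
        (hf.const_mul_atTop (div_pos hlog hc))
    have hlim := (hgen _ 2 (by norm_num) hXR').add (hgen _ 21 (by norm_num) hrR)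
    rw [add_zero] at hlim
    rw [tendsto_iff_dist_tendsto_zero]
    apply squeeze_zero' (Filter.Eventually.of_forall fun n => dist_nonneg) _ hlim
    filter_upwards [hev] with n hn
    rw [Real.dist_eq]
    have hp := hPr0 n
    have e : S n / Pr n - 1 = ε n + (S n - (1 + ε n) * Pr n) / Pr n := by field_simp; ring
    rw [e]
    refine (abs_add_le _ _).trans (add_le_add (h1 n) ?_)
    rw [abs_div, abs_of_pos hp, div_le_iff₀ hp]
    have e2 : Real.exp (15 * (K * Real.sqrt (r n))) =
        Real.exp (17 * (K * Real.sqrt (r n))) * Real.exp (-(2 * (K * Real.sqrt (r n)))) := by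
      rw [← Real.exp_add]; congr 1; ring
    refine (h2 n).trans ?_
    rw [e2, ← mul_assoc]
    exact mul_le_mul hn (h3 n) (Real.exp_pos _).le (by positivity)


end FFEH
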